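/- Let n ≥ 3 be an odd integer, let k ≥ 2 be an integer, and set d = 4(1 − 4k^n)^n. Then d + 1 = 1 − 4(4k^n − 1)^n, and n divides the class number of the imaginary quadratic field ℚ(√(d + 1)). -/

import Mathlib

/-- The quadratic field `ℚ(√d)`, realized as the subfield of `ℂ` generated over `ℚ`
by a complex square root of `d`. -/
noncomputable def Qsqrt (d : ℤ) : IntermediateField ℚ ℂ :=
  IntermediateField.adjoin ℚ {((d : ℂ) ^ ((1 : ℂ) / 2))}

/-- The class number of `ℚ(√d)`: the order of the ideal class group of its ring of
integers. -/
noncomputable def classNumSqrt (d : ℤ) : ℕ :=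
  Nat.card (ClassGroup (NumberField.RingOfIntegers (Qsqrt d)))


lemma luc_exists {R : Type*} [CommRing R] (x y : R) (t V : ℤ) (h1 : x + y = t) (h2 : x * y = V) :
    ∃ L : ℕ → ℤ, L 0 = 2 ∧ L 1 = t ∧ (∀ j, L (j+2) = t * L (j+1) - V * L j) ∧
      ∀ j, x ^ j + y ^ j = (L j : R) := by
  let F : ℕ → ℤ × ℤ := fun j => Nat.rec (2, t) (fun _ p => (p.2, t * p.2 - V * p.1)) j
  refine ⟨fun j => (F j).1, rfl, rfl, fun j => rfl, ?_⟩
  have : ∀ j, x ^ j + y ^ j = ((F j).1 : R) ∧ x ^ (j+1) + y ^ (j+1) = ((F j).2 : R) := by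
    intro j
    induction j with
    | zero => simp [F, h1]; norm_num
    | succ j ih =>
      refine ⟨ih.2, ?_⟩
      have : (F (j+1)).2 = t * (F j).2 - V * (F j).1 := rfl
      rw [this]; push_cast
      rw [← ih.1, ← ih.2, ← h1, ← h2]; ring
  exact fun j => (this j).1

lemma luc_contra (L : ℕ → ℤ) (t V : ℤ) (h0 : L 0 = 2) (h1 : L 1 = t)
    (hL : ∀ j, L (j+2) = t * L (j+1) - V * L j) (e : ℕ) (he : Odd e) (he3 : 3 ≤ e)
    (hV : (e : ℤ) < V) (h : L e = 1) : False := by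
  have ht : ∀ j, t ∣ L (2 * j + 1) := by
    intro j
    induction j with
    | zero => simp [h1]
    | succ j ih =>
      have := hL (2 * j + 1)
      rw [show 2 * (j+1) + 1 = 2 * j + 1 + 2 by ring, this]
      exact dvd_sub (dvd_mul_right _ _) (ih.mul_left _)
  have hVt : ∀ j, V ∣ L (j + 1) - t ^ (j+1) := by
    intro j
    induction j with
    | zero => simp [h1]
    | succ j ih =>
      obtain ⟨c, hc⟩ := ih
      exact ⟨t * c - L j, by rw [hL j, pow_succ]; linear_combination t * hc⟩
  obtain ⟨r, rfl⟩ := he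
  have h3 := ht r
  rw [h] at h3
  have hs : t = 1 ∨ t = -1 := Int.isUnit_iff.mp (isUnit_of_dvd_one h3)
  rcases hs with rfl | rfl
  · have key : ∀ j, ∃ c d : ℤ, L (j+2) = 1 - (j+2) * V + c * V^2 ∧ L (j+3) = 1 - (j+3) * V + d * V^2 := by
      intro j
      induction j with
      | zero =>
        refine ⟨0, 0, ?_, ?_⟩
        · rw [hL 0, h0]; norm_num [h1]; ring
        · have := hL 1; norm_num at this ⊢; rw [this, hL 0, h0, h1]; ring
      | succ j ih =>
        obtain ⟨c, d, hc, hd⟩ := ih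
        refine ⟨d, d - c * V + (j+2), ?_, ?_⟩
        · rw [show j + 1 + 2 = j + 3 by ring, hd]; push_cast; ring
        · have := hL (j+2)
          rw [show j + 1 + 3 = j + 2 + 2 by ring, this, show j + 2 + 1 = j + 3 by ring, hd, hc]; push_cast; ring
    obtain ⟨c, d, hc, hd⟩ := key (2 * r + 1 - 2)
    rw [show 2 * r + 1 - 2 + 2 = 2 * r + 1 by omega, h] at hc
    have hcast : ((2 * r + 1 - 2 : ℕ) : ℤ) = 2 * r + 1 - 2 := by omega
    rw [hcast] at hc
    have hV0 : V ≠ 0 := by omega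
    have : (2 * (r:ℤ) + 1) = c * V := by
      apply mul_right_cancel₀ hV0; linear_combination hc
    have hd : V ∣ (2 * (r:ℤ) + 1) := ⟨c, by rw [this]; ring⟩
    have := Int.le_of_dvd (by omega) hd
    push_cast at hV; omega
  · have := hVt (2 * r)
    rw [h, Odd.neg_one_pow ⟨r, rfl⟩] at this
    have := Int.le_of_dvd (by omega) this
    push_cast at hV; omega

lemma flt_part (W : ℤ) (f : ℤ) (hW : 2 ≤ W) (h : 4 * W ^ 3 - 1 = 3 * f ^ 2) : False := by
  have hodd : Odd f := by
    rcases Int.even_or_odd f with ⟨r, rfl⟩ | h'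
    · exfalso
      have : 4 * W ^ 3 - 1 = 4 * (3 * r ^ 2) := by rw [h]; ring
      omega
    · exact h'
  obtain ⟨m, rfl⟩ := hodd
  have e : W ^ 3 + m ^ 3 = (m + 1) ^ 3 := by linarith
  have F : FermatLastTheoremWith ℤ 3 := (fermatLastTheoremFor_iff_int).mp fermatLastTheoremThree
  have hW1 : 1 < W ^ 3 := by nlinarith [sq_nonneg W]
  by_cases hm : m = 0
  · subst hm; simp at e; omega
  by_cases hm' : m + 1 = 0
  · have : m = -1 := by omega
    subst this; norm_num at e; omega
  exact F W m (m+1) (by omega) hm hm' e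

/-- elements of the field -/
lemma quad_form (s : ℂ) (D : ℤ) (hD : D < 0) (hs : s ^ 2 = D) (x : ℂ)
    (hx : x ∈ IntermediateField.adjoin ℚ {s}) : ∃ a b : ℚ, x = a + b * s := by
  induction hx using IntermediateField.adjoin_induction with
  | mem x hx => rw [Set.mem_singleton_iff] at hx; exact ⟨0, 1, by simp [hx]⟩
  | algebraMap q => exact ⟨q, 0, by simp⟩
  | add x y _ _ hx hy =>
    obtain ⟨a, b, rfl⟩ := hx
    obtain ⟨c, d, rfl⟩ := hy
    exact ⟨a + c, b + d, by push_cast; ring⟩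
  | mul x y _ _ hx hy =>
    obtain ⟨a, b, rfl⟩ := hx
    obtain ⟨c, d, rfl⟩ := hy
    exact ⟨a * c + b * d * D, a * d + b * c, by push_cast; linear_combination (b * d : ℂ) * hs⟩
  | inv x _ hx =>
    obtain ⟨a, b, rfl⟩ := hx
    by_cases h0 : a = 0 ∧ b = 0
    · exact ⟨0, 0, by simp [h0.1, h0.2]⟩
    · have hD' : (D : ℚ) < 0 := by exact_mod_cast hD
      have hq : a ^ 2 - b ^ 2 * D ≠ 0 := by
        intro hq
        apply h0
        have h1 := sq_nonneg a
        have h2 : 0 ≤ b ^ 2 * (-D : ℚ) := by have := neg_pos.mpr hD'; positivity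
        have ha : a ^ 2 = 0 := by linarith
        have hb : b ^ 2 * D = 0 := by linarith
        refine ⟨by simpa using ha, ?_⟩
        rcases mul_eq_zero.mp hb with h | h
        · simpa using h
        · exact absurd h hD'.ne
      have hq' : (a ^ 2 - b ^ 2 * D : ℂ) ≠ 0 := by exact_mod_cast hq
      refine ⟨a / (a ^ 2 - b ^ 2 * D), -b / (a ^ 2 - b ^ 2 * D), ?_⟩
      apply inv_eq_of_mul_eq_one_left
      push_cast
      field_simp
      linear_combination (-b^2 : ℂ) * hs

lemma conj_s (s : ℂ) (D : ℤ) (hD : D < 0) (hs : s ^ 2 = D) : (starRingEnd ℂ) s = -s := by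
  have hre := congrArg Complex.re hs
  have him := congrArg Complex.im hs
  simp [pow_two] at hre him
  have hD' : (D : ℝ) < 0 := by exact_mod_cast hD
  have : s.re = 0 := by
    have h : s.re * s.im = 0 := by linarith
    rcases mul_eq_zero.mp h with h | h
    · exact h
    · exfalso; rw [h] at hre; nlinarith [sq_nonneg s.re]
  apply Complex.ext <;> simp [this]

lemma rat_int (q : ℚ) (h : IsIntegral ℤ (q : ℂ)) : ∃ z : ℤ, q = z := by
  have h' : IsIntegral ℤ q := by
    have := (isIntegral_algebraMap_iff (R := ℤ) (A := ℚ) (B := ℂ) (algebraMap ℚ ℂ).injective (x := q))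
    exact this.mp (by simpa using h)
  obtain ⟨z, hz⟩ := IsIntegrallyClosed.isIntegral_iff.mp h'
  exact ⟨z, by simpa using hz.symm⟩

lemma tr_nm (s : ℂ) (D : ℤ) (hD : D < 0) (hs : s ^ 2 = D) (x : ℂ)
    (hx : x ∈ IntermediateField.adjoin ℚ {s}) (hi : IsIntegral ℤ x) :
    ∃ t V : ℤ, x + (starRingEnd ℂ) x = t ∧ x * (starRingEnd ℂ) x = V ∧
     ∃ b : ℚ, (t ^ 2 - 4 * V : ℚ) = 4 * b ^ 2 * D := by
  obtain ⟨a, b, rfl⟩ := quad_form s D hD hs x hx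
  have hc := conj_s s D hD hs
  have hi' : IsIntegral ℤ ((starRingEnd ℂ) (a + b * s)) :=
    hi.map ((starRingEnd ℂ).toIntAlgHom)
  have e1 : ((a : ℂ) + b * s) + (starRingEnd ℂ) (a + b * s) = ((2 * a : ℚ) : ℂ) := by
    simp [hc]; ring
  have e2 : ((a : ℂ) + b * s) * (starRingEnd ℂ) (a + b * s) = ((a^2 - b^2 * D : ℚ) : ℂ) := by
    simp [hc]; linear_combination (-b^2 : ℂ) * hs
  obtain ⟨t, ht⟩ := rat_int _ (e1 ▸ hi.add hi')
  obtain ⟨V, hV⟩ := rat_int _ (e2 ▸ hi.mul hi')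
  refine ⟨t, V, by rw [e1, ht]; simp, by rw [e2, hV]; simp, b, ?_⟩
  rw [← ht, ← hV]; ring

lemma no_three (U : ℤ) (hU : 2 ≤ U) (n : ℕ) (hn : n ≠ 0) (h3 : 3 ∣ n) (b : ℚ)
    (hb : (3 : ℚ) = 4 * b ^ 2 * ((4 * U ^ n - 1 : ℤ) : ℚ)) : False := by
  obtain ⟨m, rfl⟩ := h3
  set N : ℤ := 4 * U ^ (3 * m) - 1 with hN
  have hsq : IsSquare ((3 * N : ℤ) : ℚ) := ⟨2 * b * N, by push_cast; linear_combination (N : ℚ) * hb⟩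
  rw [Rat.isSquare_intCast_iff] at hsq
  obtain ⟨g, hg⟩ := hsq
  have h3g : (3 : ℤ) ∣ g := by
    have : (3 : ℤ) ∣ g * g := ⟨N, hg.symm⟩
    rcases Int.prime_three.dvd_mul.mp this with h | h <;> exact h
  obtain ⟨f, rfl⟩ := h3g
  have hf : N = 3 * f ^ 2 := by linarith
  refine flt_part (U ^ m) f ?_ (by rw [← hf, hN]; ring)
  have : U ^ 1 ≤ U ^ m := pow_le_pow_right₀ (by omega) (by omega)
  linarith

lemma unit_part (s : ℂ) (D : ℤ) (hD : D < 0) (hs : s ^ 2 = D) (x y : ℂ)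
    (hx : x ∈ IntermediateField.adjoin ℚ {s}) (hi : IsIntegral ℤ x)
    (hy : y ∈ IntermediateField.adjoin ℚ {s}) (hi' : IsIntegral ℤ y) (hxy : x * y = 1) :
    x ^ 4 = 1 ∨ (x ^ 6 = 1 ∧ ∃ b : ℚ, (3 : ℚ) = 4 * b ^ 2 * ((-D : ℤ) : ℚ)) := by
  obtain ⟨t, V, h1, h2, b, h3⟩ := tr_nm s D hD hs x hx hi
  obtain ⟨t', V', h1', h2', -⟩ := tr_nm s D hD hs y hy hi'
  have hVV : V * V' = 1 := by
    have : ((V * V' : ℤ) : ℂ) = 1 := by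
      push_cast
      rw [← h2, ← h2', show x * (starRingEnd ℂ) x * (y * (starRingEnd ℂ) y) = (x * y) * ((starRingEnd ℂ) (x * y)) by rw [map_mul]; ring, hxy]
      simp
    exact_mod_cast this
  have hV0 : 0 ≤ V := by
    rw [Complex.mul_conj] at h2
    have : Complex.normSq x = (V : ℝ) := by exact_mod_cast h2
    have := Complex.normSq_nonneg x
    have : (0:ℝ) ≤ V := by linarith
    exact_mod_cast this
  have hV : V = 1 := by
    rcases Int.isUnit_iff.mp (IsUnit.of_mul_eq_one _ hVV) with h | h <;> omega
  subst hV
  have ht : t ^ 2 ≤ 4 := by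
    have : (t ^ 2 - 4 : ℚ) ≤ 0 := by
      have hD' : (D : ℚ) < 0 := by exact_mod_cast hD
      have : (t ^ 2 - 4 : ℚ) = 4 * b ^ 2 * D := by rw [← h3]; simp
      rw [this]
      exact mul_nonpos_of_nonneg_of_nonpos (by positivity) hD'.le
    have h : ((t ^ 2 : ℤ) : ℚ) ≤ ((4 : ℤ) : ℚ) := by push_cast; linarith
    exact_mod_cast h
  have hq : x ^ 2 = t * x - 1 := by
    rw [← h1]; linear_combination -h2
  have ha : -2 ≤ t := by nlinarith
  have hb : t ≤ 2 := by nlinarith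
  interval_cases t
  · left; push_cast at hq
    have : (x + 1) ^ 2 = 0 := by linear_combination hq
    have : x + 1 = 0 := by simpa using this
    rw [eq_neg_of_add_eq_zero_left this]; norm_num
  · right; push_cast at hq
    refine ⟨?_, b, ?_⟩
    · linear_combination (x^4 - x^3 + x - 1) * hq
    · push_cast at h3 ⊢; linarith
  · left; push_cast at hq
    linear_combination (x^2 - 1) * hq
  · right; push_cast at hq
    refine ⟨?_, b, ?_⟩
    · linear_combination (x^4 + x^3 - x - 1) * hq
    · push_cast at h3 ⊢; linarith
  · left; push_cast at hq
    have : (x - 1) ^ 2 = 0 := by linear_combination hq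
    have : x - 1 = 0 := by simpa using this
    rw [sub_eq_zero.mp this]; norm_num

lemma root_of_unit {M : Type*} [Group M] (u : M) (c e : ℕ) (h : u ^ c = 1) (hc : Nat.Coprime c e) :
    ∃ w : M, u = w ^ e := by
  have h1 := Nat.gcd_eq_gcd_ab c e
  rw [hc] at h1
  refine ⟨u ^ (Nat.gcdB c e), ?_⟩
  rw [← zpow_natCast, ← zpow_mul]
  calc u = u ^ ((1 : ℕ) : ℤ) := by simp
    _ = _ := by
      rw [h1, zpow_add, zpow_mul, zpow_natCast, h, one_zpow, one_mul, mul_comm]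

open NumberField

lemma main_aux (n : ℕ) (hn : 3 ≤ n) (hodd : Odd n) (U : ℤ) (hU : (n : ℤ) < U) (D : ℤ)
    (hD : D = 1 - 4 * U ^ n) : n ∣ classNumSqrt D := by
  have hUn : 1 ≤ U ^ n := one_le_pow₀ (by omega)
  have hD0 : D < 0 := by omega
  unfold classNumSqrt
  set s : ℂ := (D : ℂ) ^ ((1 : ℂ) / 2) with hsdef
  have hs : s ^ 2 = D := by
    have := Complex.cpow_nat_inv_pow (D : ℂ) (n := 2) (by norm_num)
    rw [hsdef]; simpa using this
  have hK : Qsqrt D = IntermediateField.adjoin ℚ {s} := rfl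
  have hconj := conj_s s D hD0 hs
  have hsint : IsIntegral ℚ s := ⟨Polynomial.X ^ 2 - Polynomial.C (D : ℚ),
    Polynomial.monic_X_pow_sub_C _ (by norm_num), by
      rw [Polynomial.eval₂_sub, Polynomial.eval₂_pow, Polynomial.eval₂_X, Polynomial.eval₂_C, hs]; simp⟩
  have : FiniteDimensional ℚ (Qsqrt D) := by
    rw [hK]; exact IntermediateField.adjoin.finiteDimensional hsint
  have : NumberField (Qsqrt D) := { to_charZero := inferInstance, to_finiteDimensional := this }
  -- coercion to ℂ
  let φ : 𝓞 (Qsqrt D) →+* ℂ := (Qsqrt D).val.toRingHom.comp (algebraMap (𝓞 (Qsqrt D)) (Qsqrt D))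
  have hφinj : Function.Injective φ := (Qsqrt D).val.toRingHom.injective.comp
    (RingOfIntegers.coe_injective)
  have hφmem : ∀ x, φ x ∈ IntermediateField.adjoin ℚ {s} := fun x => (algebraMap (𝓞 (Qsqrt D)) (Qsqrt D) x).2
  have hφint : ∀ x, IsIntegral ℤ (φ x) := fun x => (RingOfIntegers.isIntegral x).map φ.toIntAlgHom
  -- α
  have hsK : s ∈ Qsqrt D := IntermediateField.mem_adjoin_simple_self ℚ s
  let a : Qsqrt D := (1 + ⟨s, hsK⟩) / 2
  have hs2 : (⟨s, hsK⟩ : Qsqrt D) ^ 2 = (D : Qsqrt D) := by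
    apply Subtype.ext; simpa using hs
  have haq : a ^ 2 - a + (U : Qsqrt D) ^ n = 0 := by
    simp only [a]
    have : (D : Qsqrt D) = 1 - 4 * (U : Qsqrt D) ^ n := by rw [hD]; push_cast; ring
    rw [this] at hs2
    linear_combination hs2 / 4
  have haint : IsIntegral ℤ a := by
    refine ⟨Polynomial.X ^ 2 - Polynomial.X + Polynomial.C (U ^ n), by monicity!, ?_⟩
    rw [Polynomial.eval₂_add, Polynomial.eval₂_sub, Polynomial.eval₂_pow, Polynomial.eval₂_X, Polynomial.eval₂_C]
    simpa using haq
  let α : 𝓞 (Qsqrt D) := ⟨a, haint⟩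
  have hα : α * (1 - α) = (U : 𝓞 (Qsqrt D)) ^ n := by
    apply RingOfIntegers.coe_injective
    have : algebraMap (𝓞 (Qsqrt D)) (Qsqrt D) α = a := rfl
    simp only [map_mul, map_sub, map_pow, map_one, map_intCast, this]
    linear_combination -haq
  have hφα : φ α + (starRingEnd ℂ) (φ α) = 1 := by
    have : φ α = (1 + s) / 2 := by
      change ((a : Qsqrt D) : ℂ) = _
      simp only [a]
      push_cast
      rfl
    rw [this, map_div₀, map_add, hconj, map_one, Complex.conj_ofNat]; ring
  have hφα' : φ α * (starRingEnd ℂ) (φ α) = (U : ℂ) ^ n := by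
    have h := congrArg φ hα
    simp only [map_mul, map_sub, map_pow, map_one, map_intCast] at h
    rw [← h]; rw [← hφα]; ring
  have hU0 : (U : 𝓞 (Qsqrt D)) ^ n ≠ 0 := pow_ne_zero _ (by exact_mod_cast (by omega : U ≠ 0))
  have hα0 : α ≠ 0 := by intro h; rw [h] at hα; simp at hα; exact hU0 hα.symm
  -- ideal
  obtain ⟨I, hI⟩ : ∃ I : Ideal (𝓞 (Qsqrt D)), Ideal.span {α} = I ^ n := by
    refine exists_eq_pow_of_mul_eq_pow_of_coprime (b := Ideal.span {1 - α})
      (c := Ideal.span {(U : 𝓞 (Qsqrt D))}) ?_ ?_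
    · rw [Ideal.isCoprime_span_singleton_iff]
      exact ⟨1, 1, by ring⟩
    · rw [Ideal.span_singleton_mul_span_singleton, hα, Ideal.span_singleton_pow]
  have hn0 : n ≠ 0 := by omega
  have hI0 : I ≠ ⊥ := by
    rintro rfl
    rw [← Ideal.zero_eq_bot, zero_pow hn0, Ideal.zero_eq_bot, Ideal.span_singleton_eq_bot] at hI
    exact hα0 hI
  have hI0' : I ∈ nonZeroDivisors (Ideal (𝓞 (Qsqrt D))) := mem_nonZeroDivisors_of_ne_zero hI0
  set C := ClassGroup.mk0 (⟨I, hI0'⟩ : nonZeroDivisors (Ideal (𝓞 (Qsqrt D)))) with hC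
  have hpow : ∀ j, C ^ j = 1 ↔ (I ^ j).IsPrincipal := by
    intro j
    rw [hC, ← map_pow, ← ClassGroup.mk0_eq_one_iff (pow_mem hI0' j)]
    rfl
  have hCn : C ^ n = 1 := (hpow n).mpr (by rw [← hI]; exact ⟨α, rfl⟩)
  obtain ⟨e, he⟩ := orderOf_dvd_of_pow_eq_one hCn
  set m := orderOf C with hm
  have heodd : Odd e := by rw [he] at hodd; exact (Nat.odd_mul.mp hodd).2
  have hm0 : m ≠ 0 := by rintro h; rw [h] at he; omega
  have he0 : e ≠ 0 := by rintro h; rw [h] at he; omega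
  by_cases he1 : e = 1
  · rw [he, he1, mul_one]; exact orderOf_dvd_natCard C
  exfalso
  have he3 : 3 ≤ e := by rcases heodd with ⟨r, rfl⟩; omega
  obtain ⟨β, hβ⟩ := (hpow m).mp (pow_orderOf_eq_one C)
  have hβ' : I ^ m = Ideal.span {β} := hβ
  have hass : Associated (β ^ e) α := by
    rw [← Ideal.span_singleton_eq_span_singleton, ← Ideal.span_singleton_pow, ← hβ', ← pow_mul, ← he, hI]
  obtain ⟨u, hu⟩ := hass
  have hroot : ∃ w : (𝓞 (Qsqrt D))ˣ, u = w ^ e := by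
    have hcop2 : Nat.Coprime 2 e := by simpa using heodd
    rcases unit_part s D hD0 hs (φ u) (φ ↑u⁻¹) (hφmem _) (hφint _) (hφmem _) (hφint _)
      (by rw [← map_mul]; simp) with h | ⟨h, b, hb⟩
    · have h' : u ^ 4 = 1 := by
        apply Units.ext; apply hφinj; simpa using h
      exact root_of_unit u 4 e h' (by
        rw [show 4 = 2 ^ 2 by norm_num]; exact Nat.Coprime.pow_left 2 hcop2)
    · have h' : u ^ 6 = 1 := by
        apply Units.ext; apply hφinj; simpa using h
      by_cases h3 : 3 ∣ n
      · exfalso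
        refine no_three U (by omega) n hn0 h3 b ?_
        rw [hb, hD]; push_cast; ring
      · have hcop3 : Nat.Coprime 3 e :=
          (Nat.Prime.coprime_iff_not_dvd Nat.prime_three).mpr
            (fun h => h3 (by rw [he]; exact h.mul_left _))
        exact root_of_unit u 6 e h' (by
          rw [show 6 = 2 * 3 by norm_num]; exact Nat.Coprime.mul_left hcop2 hcop3)
  obtain ⟨w, hw⟩ := hroot
  set γ := β * (w : 𝓞 (Qsqrt D)) with hγ
  have hγe : γ ^ e = α := by rw [hγ, mul_pow, ← hu, hw]; simp
  obtain ⟨t, V, h1, h2, -⟩ := tr_nm s D hD0 hs (φ γ) (hφmem _) (hφint _)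
  obtain ⟨L, hL0, hL1, hL, hLx⟩ := luc_exists _ _ t V h1 h2
  have hVe : V ^ e = (U ^ m) ^ e := by
    have : ((V ^ e : ℤ) : ℂ) = (((U ^ m) ^ e : ℤ) : ℂ) := by
      push_cast
      rw [← h2, mul_pow, ← map_pow (starRingEnd ℂ), ← map_pow φ, hγe, hφα', ← pow_mul, ← he]
    exact_mod_cast this
  have hV : V = U ^ m := heodd.strictMono_pow.injective hVe
  have hVU : U ≤ V := by
    rw [hV]; exact le_self_pow₀ (by omega) hm0
  have hen : e ≤ n := by rw [he]; exact Nat.le_mul_of_pos_left _ (by omega)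
  refine luc_contra L t V hL0 hL1 hL e heodd he3 (by omega) ?_
  have := hLx e
  rw [← map_pow (starRingEnd ℂ), ← map_pow φ, hγe, hφα] at this
  exact_mod_cast this.symm

/-- Let `n ≥ 3` be an odd integer, `k ≥ 2` an integer, and `d = 4(1 − 4kⁿ)ⁿ`. Then
`d + 1 = 1 − 4(4kⁿ − 1)ⁿ`, and `n` divides the class number of `ℚ(√(d + 1))`. -/
theorem classNumber_dvd_d_add_one
    (n : ℕ) (hn : 3 ≤ n) (hnodd : Odd n) (k : ℤ) (hk : 2 ≤ k)
    (d : ℤ) (hd : d = 4 * (1 - 4 * k ^ n) ^ n) :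
    d + 1 = 1 - 4 * (4 * k ^ n - 1) ^ n ∧ n ∣ classNumSqrt (d + 1) := by
  have h1 : d + 1 = 1 - 4 * (4 * k ^ n - 1) ^ n := by
    rw [hd, show (1 - 4 * k ^ n) = -(4 * k ^ n - 1) by ring, hnodd.neg_pow]; ring
  refine ⟨h1, main_aux n hn hnodd (4 * k ^ n - 1) ?_ _ h1⟩
  have h2 : (2 : ℤ) ^ n ≤ k ^ n := pow_le_pow_left₀ (by norm_num) hk n
  have h3 : (n : ℤ) < 2 ^ n := by exact_mod_cast Nat.lt_two_pow_self
  omega
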